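/- If the smooth functions A, B, C, D on an open set U ⊆ ℝ² are such that the symplectic connection ∇ = ∂ + Π is preferred, then on U: (a) the symmetrized covariant derivative of the curvature one-form vanishes, i.e. ∂_xρ₁ − A·ρ₁ − B·ρ₂ = 0, ∂_yρ₂ − C·ρ₁ − D·ρ₂ = 0, and (1/2)(∂_xρ₂ + ∂_yρ₁) + D·ρ₁ + A·ρ₂ = 0; and (b) the covariant Hessian of the moment map satisfies ∇dK = (1/6)ρ⊗ρ − K·Ric, i.e. K_{xx} − A·K_x − B·K_y = (1/6)ρ₁² − K·R₁₁, K_{yy} − C·K_x − D·K_y = (1/6)ρ₂² − K·R₂₂, and K_{xy} + D·K_x + A·K_y = (1/6)ρ₁ρ₂ − K·R₁₂. -/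

import Mathlib

/-!
The identities are the successive integrability conditions of an overdetermined system.

Write `r = ρ₁`, `s = ρ₂`. Antisymmetrizing `∇Ric` gives
`r = -2 ((∇_x Ric)_{xy} - (∇_y Ric)_{xx})` and `s = -2 ((∇_x Ric)_{yy} - (∇_y Ric)_{xy})`
for every connection (`rho1_eq`, `rho2_eq`), and likewise `K = -(s_x - r_y) / 2` (`Kmap_eq`).
If `∇` is preferred, the symmetric part of `∇Ric` vanishes, so all first derivatives of the Ricci
components are expressed through `Ric` and `ρ` (`hasPartials_ric`).
Equality of the mixed second derivatives of `R₁₁`, `R₂₂`, `R₁₂` is then exactly (a). Together with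
the formula for `K`, (a) expresses all first derivatives of `ρ` through `ρ` and `K`
(`hasPartials_rho`). Equality of the mixed second derivatives of `r` and `s` gives
`K_x = R₁₁ s - R₁₂ r` and `K_y = R₁₂ s - R₂₂ r` (`hasPartials_K`), and differentiating these once
more, using the formulas for the derivatives of `Ric` and `ρ`, gives (b).
-/

set_option linter.unusedVariables false

noncomputable section

/-- Partial derivative with respect to the first variable. -/
def px (f : ℝ → ℝ → ℝ) : ℝ → ℝ → ℝ := fun x y => deriv (fun s => f s y) x

/-- Partial derivative with respect to the second variable. -/
def py (f : ℝ → ℝ → ℝ) : ℝ → ℝ → ℝ := fun x y => deriv (fun s => f x s) y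

/-- Smoothness on a subset of the plane, for a curried function of two real variables. -/
def SmoothOn2 (f : ℝ → ℝ → ℝ) (U : Set (ℝ × ℝ)) : Prop :=
  ContDiffOn ℝ (⊤ : ℕ∞) (Function.uncurry f) U

/-- Smoothness on the whole plane, for a curried function of two real variables. -/
def Smooth2 (f : ℝ → ℝ → ℝ) : Prop :=
  ContDiff ℝ (⊤ : ℕ∞) (Function.uncurry f)

/-- First component ρ₁ of the curvature one-form ρ = ρ₁dx + ρ₂dy of the symplectic
connection ∇ = ∂ + Π determined by the functions A, B, C, D in Darboux coordinates. -/
def rho1 (A B C D : ℝ → ℝ → ℝ) : ℝ → ℝ → ℝ := fun x y =>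
  (-2) * ((-2) * py (px A) x y - py (py B) x y - px (px D) x y
    + px (fun x' y' => A x' y' * D x' y' - B x' y' * C x' y') x y
    + 3 * py (fun x' y' => A x' y' ^ 2 - B x' y' * D x' y') x y
    + 2 * A x y * px D x y - D x y * px A x y - B x y * px C x y)

/-- Second component ρ₂ of the curvature one-form. -/
def rho2 (A B C D : ℝ → ℝ → ℝ) : ℝ → ℝ → ℝ := fun x y =>
  (-2) * (2 * py (px D) x y + py (py A) x y + px (px C) x y
    + 3 * px (fun x' y' => A x' y' * C x' y' - D x' y' ^ 2) x y
    - py (fun x' y' => A x' y' * D x' y' - B x' y' * C x' y') x y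
    - 2 * D x y * py A x y + A x y * py D x y + C x y * py B x y)

/-- The Cahen–Gutt moment map K(∇) of the symplectic connection ∇ = ∂ + Π. -/
def Kmap (A B C D : ℝ → ℝ → ℝ) : ℝ → ℝ → ℝ := fun x y =>
  3 * py (py (px A)) x y + 3 * py (px (px D)) x y
    + py (py (py B)) x y + px (px (px C)) x y
    - px B x y * py C x y + py B x y * px C x y
    + 3 * (px A x y * py D x y - py A x y * px D x y)
    + 3 * px (px (fun x' y' => A x' y' * C x' y' - D x' y' ^ 2)) x y
    + 3 * py (py (fun x' y' => B x' y' * D x' y' - A x' y' ^ 2)) x y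
    - 3 * py (px (fun x' y' => A x' y' * D x' y' - B x' y' * C x' y')) x y

/-- First component of −H(k), the dx⊗dx⊗dx component of the criticality operator. -/
def E1 (A B C D k : ℝ → ℝ → ℝ) : ℝ → ℝ → ℝ := fun x y =>
  px (px (px k)) x y - 3 * A x y * px (px k) x y - 3 * B x y * py (px k) x y
    + px k x y * py B x y - px B x y * py k x y

/-- The dy⊗dy⊗dy component of the criticality operator. -/
def E2 (A B C D k : ℝ → ℝ → ℝ) : ℝ → ℝ → ℝ := fun x y =>
  py (py (py k)) x y - 3 * D x y * py (py k) x y - 3 * C x y * py (px k) x y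
    + py k x y * px C x y - py C x y * px k x y

/-- The dx⊙dx⊙dy component of the criticality operator. -/
def E3 (A B C D k : ℝ → ℝ → ℝ) : ℝ → ℝ → ℝ := fun x y =>
  py (px (px k)) x y + 2 * D x y * px (px k) x y - B x y * py (py k) x y
    + A x y * py (px k) x y + px A x y * py k x y - py A x y * px k x y

/-- The dx⊙dy⊙dy component of the criticality operator. -/
def E4 (A B C D k : ℝ → ℝ → ℝ) : ℝ → ℝ → ℝ := fun x y =>
  py (py (px k)) x y + 2 * A x y * py (py k) x y - C x y * px (px k) x y
    + D x y * py (px k) x y + py D x y * px k x y - px D x y * py k x y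

/-- ∇ = ∂ + Π is critical symplectic on U: the four components of H(K(∇)) vanish on U. -/
def Critical (A B C D : ℝ → ℝ → ℝ) (U : Set (ℝ × ℝ)) : Prop :=
  ∀ p ∈ U, E1 A B C D (Kmap A B C D) p.1 p.2 = 0 ∧
    E2 A B C D (Kmap A B C D) p.1 p.2 = 0 ∧
    E3 A B C D (Kmap A B C D) p.1 p.2 = 0 ∧
    E4 A B C D (Kmap A B C D) p.1 p.2 = 0

/-- Ricci component R₁₁. -/
def R11 (A B C D : ℝ → ℝ → ℝ) : ℝ → ℝ → ℝ := fun x y =>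
  px A x y + py B x y + 2 * (B x y * D x y - A x y ^ 2)

/-- Ricci component R₂₂. -/
def R22 (A B C D : ℝ → ℝ → ℝ) : ℝ → ℝ → ℝ := fun x y =>
  px C x y + py D x y + 2 * (A x y * C x y - D x y ^ 2)

/-- Ricci component R₁₂ = R₂₁. -/
def R12 (A B C D : ℝ → ℝ → ℝ) : ℝ → ℝ → ℝ := fun x y =>
  - py A x y - px D x y + A x y * D x y - B x y * C x y

/-- (∇_x Ric)_{xx}, using Γ^x_{xx}=A, Γ^y_{xx}=B, Γ^x_{xy}=−D, Γ^y_{xy}=−A, Γ^x_{yy}=C, Γ^y_{yy}=D. -/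
def nxRxx (A B C D : ℝ → ℝ → ℝ) : ℝ → ℝ → ℝ := fun x y =>
  px (R11 A B C D) x y
    - 2 * (A x y * R11 A B C D x y + B x y * R12 A B C D x y)

/-- (∇_y Ric)_{xx}. -/
def nyRxx (A B C D : ℝ → ℝ → ℝ) : ℝ → ℝ → ℝ := fun x y =>
  py (R11 A B C D) x y
    - 2 * ((-(D x y)) * R11 A B C D x y + (-(A x y)) * R12 A B C D x y)

/-- (∇_x Ric)_{xy}. -/
def nxRxy (A B C D : ℝ → ℝ → ℝ) : ℝ → ℝ → ℝ := fun x y =>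
  px (R12 A B C D) x y
    - (A x y * R12 A B C D x y + B x y * R22 A B C D x y)
    - ((-(D x y)) * R11 A B C D x y + (-(A x y)) * R12 A B C D x y)

/-- (∇_y Ric)_{xy}. -/
def nyRxy (A B C D : ℝ → ℝ → ℝ) : ℝ → ℝ → ℝ := fun x y =>
  py (R12 A B C D) x y
    - ((-(D x y)) * R12 A B C D x y + (-(A x y)) * R22 A B C D x y)
    - (C x y * R11 A B C D x y + D x y * R12 A B C D x y)

/-- (∇_x Ric)_{yy}. -/
def nxRyy (A B C D : ℝ → ℝ → ℝ) : ℝ → ℝ → ℝ := fun x y =>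
  px (R22 A B C D) x y
    - 2 * ((-(D x y)) * R12 A B C D x y + (-(A x y)) * R22 A B C D x y)

/-- (∇_y Ric)_{yy}. -/
def nyRyy (A B C D : ℝ → ℝ → ℝ) : ℝ → ℝ → ℝ := fun x y =>
  py (R22 A B C D) x y
    - 2 * (C x y * R12 A B C D x y + D x y * R22 A B C D x y)

/-- ∇ = ∂ + Π is preferred on U: the symmetrized covariant derivative of Ric vanishes on U. -/
def Preferred (A B C D : ℝ → ℝ → ℝ) (U : Set (ℝ × ℝ)) : Prop :=
  ∀ p ∈ U, nxRxx A B C D p.1 p.2 = 0 ∧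
    2 * nxRxy A B C D p.1 p.2 + nyRxx A B C D p.1 p.2 = 0 ∧
    2 * nyRxy A B C D p.1 p.2 + nxRyy A B C D p.1 p.2 = 0 ∧
    nyRyy A B C D p.1 p.2 = 0

/-! ### Calculus of partial derivatives on an open set -/

/-- On `U`, the function `f` has partial derivatives `fx` and `fy` (existence included). -/
def HasPartials (U : Set (ℝ × ℝ)) (f fx fy : ℝ → ℝ → ℝ) : Prop :=
  ∀ p ∈ U, HasDerivAt (fun s => f s p.2) (fx p.1 p.2) p.1 ∧
    HasDerivAt (fun s => f p.1 s) (fy p.1 p.2) p.2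

section Calculus

variable {U : Set (ℝ × ℝ)} {f fx fy g gx gy : ℝ → ℝ → ℝ}

theorem HasPartials.px_eq (h : HasPartials U f fx fy) {p : ℝ × ℝ} (hp : p ∈ U) :
    px f p.1 p.2 = fx p.1 p.2 := (h p hp).1.deriv

theorem HasPartials.py_eq (h : HasPartials U f fx fy) {p : ℝ × ℝ} (hp : p ∈ U) :
    py f p.1 p.2 = fy p.1 p.2 := (h p hp).2.deriv

theorem HasPartials.add (hf : HasPartials U f fx fy) (hg : HasPartials U g gx gy) :
    HasPartials U (fun x y => f x y + g x y) (fun x y => fx x y + gx x y)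
      (fun x y => fy x y + gy x y) := fun p hp =>
  ⟨(hf p hp).1.fun_add (hg p hp).1, (hf p hp).2.fun_add (hg p hp).2⟩

theorem HasPartials.sub (hf : HasPartials U f fx fy) (hg : HasPartials U g gx gy) :
    HasPartials U (fun x y => f x y - g x y) (fun x y => fx x y - gx x y)
      (fun x y => fy x y - gy x y) := fun p hp =>
  ⟨(hf p hp).1.fun_sub (hg p hp).1, (hf p hp).2.fun_sub (hg p hp).2⟩

theorem HasPartials.mul (hf : HasPartials U f fx fy) (hg : HasPartials U g gx gy) :
    HasPartials U (fun x y => f x y * g x y) (fun x y => fx x y * g x y + f x y * gx x y)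
      (fun x y => fy x y * g x y + f x y * gy x y) := fun p hp =>
  ⟨(hf p hp).1.fun_mul (hg p hp).1, (hf p hp).2.fun_mul (hg p hp).2⟩

theorem HasPartials.smul (c : ℝ) (hf : HasPartials U f fx fy) :
    HasPartials U (fun x y => c * f x y) (fun x y => c * fx x y)
      (fun x y => c * fy x y) := fun p hp =>
  ⟨(hf p hp).1.const_mul c, (hf p hp).2.const_mul c⟩

theorem HasPartials.sq (hf : HasPartials U f fx fy) :
    HasPartials U (fun x y => f x y ^ 2) (fun x y => 2 * f x y * fx x y)
      (fun x y => 2 * f x y * fy x y) := fun p hp =>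
  ⟨by simpa using (hf p hp).1.fun_pow 2, by simpa using (hf p hp).2.fun_pow 2⟩

theorem HasPartials.neg (hf : HasPartials U f fx fy) :
    HasPartials U (fun x y => - f x y) (fun x y => - fx x y) (fun x y => - fy x y) :=
  fun p hp => ⟨(hf p hp).1.fun_neg, (hf p hp).2.fun_neg⟩

theorem HasPartials.congr (hU : IsOpen U) (hf : HasPartials U f fx fy)
    (h : ∀ p ∈ U, g p.1 p.2 = f p.1 p.2) : HasPartials U g fx fy := by
  intro p hp
  have hn : ∀ᶠ q : ℝ × ℝ in nhds p, g q.1 q.2 = f q.1 q.2 := by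
    filter_upwards [hU.mem_nhds hp] with q hq using h q hq
  have c1 : Filter.Tendsto (fun s : ℝ => (s, p.2)) (nhds p.1) (nhds p) :=
    (by fun_prop : Continuous fun s : ℝ => (s, p.2)).tendsto p.1
  have c2 : Filter.Tendsto (fun s : ℝ => (p.1, s)) (nhds p.2) (nhds p) :=
    (by fun_prop : Continuous fun s : ℝ => (p.1, s)).tendsto p.2
  exact ⟨(hf p hp).1.congr_of_eventuallyEq (c1.eventually hn),
    (hf p hp).2.congr_of_eventuallyEq (c2.eventually hn)⟩

theorem HasPartials.congr_partials (hf : HasPartials U f fx fy)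
    (hx : ∀ p ∈ U, fx p.1 p.2 = gx p.1 p.2) (hy : ∀ p ∈ U, fy p.1 p.2 = gy p.1 p.2) :
    HasPartials U f gx gy := fun p hp => by
  rw [← hx p hp, ← hy p hp]
  exact hf p hp

theorem SmoothOn2.add (hf : SmoothOn2 f U) (hg : SmoothOn2 g U) :
    SmoothOn2 (fun x y => f x y + g x y) U := ContDiffOn.add hf hg

theorem SmoothOn2.sub (hf : SmoothOn2 f U) (hg : SmoothOn2 g U) :
    SmoothOn2 (fun x y => f x y - g x y) U := ContDiffOn.sub hf hg

theorem SmoothOn2.mul (hf : SmoothOn2 f U) (hg : SmoothOn2 g U) :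
    SmoothOn2 (fun x y => f x y * g x y) U := ContDiffOn.mul hf hg

theorem SmoothOn2.pow (hf : SmoothOn2 f U) (n : ℕ) :
    SmoothOn2 (fun x y => f x y ^ n) U := ContDiffOn.pow hf n

theorem SmoothOn2.neg (hf : SmoothOn2 f U) :
    SmoothOn2 (fun x y => - f x y) U := ContDiffOn.neg hf

theorem SmoothOn2.smul (c : ℝ) (hf : SmoothOn2 f U) :
    SmoothOn2 (fun x y => c * f x y) U := contDiffOn_const.mul hf

theorem SmoothOn2.congr (hf : SmoothOn2 f U) (h : ∀ p ∈ U, g p.1 p.2 = f p.1 p.2) :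
    SmoothOn2 g U := ContDiffOn.congr hf h

theorem SmoothOn2.hasFDerivAt (hU : IsOpen U) (hf : SmoothOn2 f U) {p : ℝ × ℝ} (hp : p ∈ U) :
    HasFDerivAt (Function.uncurry f) (fderiv ℝ (Function.uncurry f) p) p :=
  ((ContDiffOn.contDiffAt hf (hU.mem_nhds hp)).differentiableAt (by simp)).hasFDerivAt

theorem SmoothOn2.hasPartials_fderiv (hU : IsOpen U) (hf : SmoothOn2 f U) :
    HasPartials U f (fun x y => fderiv ℝ (Function.uncurry f) (x, y) (1, 0))
      (fun x y => fderiv ℝ (Function.uncurry f) (x, y) (0, 1)) := by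
  intro p hp
  have h := hf.hasFDerivAt hU hp
  constructor
  · exact HasFDerivAt.comp_hasDerivAt p.1 h
      ((hasDerivAt_id p.1).prodMk (hasDerivAt_const p.1 p.2))
  · exact HasFDerivAt.comp_hasDerivAt p.2 h
      ((hasDerivAt_const p.2 p.1).prodMk (hasDerivAt_id p.2))

theorem SmoothOn2.hasPartials (hU : IsOpen U) (hf : SmoothOn2 f U) :
    HasPartials U f (px f) (py f) :=
  (hf.hasPartials_fderiv hU).congr_partials
    (fun _ hp => ((hf.hasPartials_fderiv hU).px_eq hp).symm)
    (fun _ hp => ((hf.hasPartials_fderiv hU).py_eq hp).symm)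

theorem SmoothOn2.fderiv_apply (hU : IsOpen U) (hf : SmoothOn2 f U) (v : ℝ × ℝ) :
    SmoothOn2 (fun x y => fderiv ℝ (Function.uncurry f) (x, y) v) U :=
  (ContDiffOn.fderiv_of_isOpen (m := (⊤ : ℕ∞)) hf hU (by simp)).clm_apply contDiffOn_const

theorem SmoothOn2.px (hU : IsOpen U) (hf : SmoothOn2 f U) : SmoothOn2 (px f) U :=
  (hf.fderiv_apply hU (1, 0)).congr fun _ hp => (hf.hasPartials_fderiv hU).px_eq hp

theorem SmoothOn2.py (hU : IsOpen U) (hf : SmoothOn2 f U) : SmoothOn2 (py f) U :=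
  (hf.fderiv_apply hU (0, 1)).congr fun _ hp => (hf.hasPartials_fderiv hU).py_eq hp

/-- Symmetry of second derivatives, for partial derivatives known only on `U`. -/
theorem HasPartials.mixed (hU : IsOpen U) (hf : SmoothOn2 f U) {a b ax ay bx b_y : ℝ → ℝ → ℝ}
    (h : HasPartials U f a b) (ha : HasPartials U a ax ay) (hb : HasPartials U b bx b_y)
    {p : ℝ × ℝ} (hp : p ∈ U) : ay p.1 p.2 = bx p.1 p.2 := by
  have key : ∀ v w : ℝ × ℝ, fderiv ℝ (Function.uncurry
        fun x y => fderiv ℝ (Function.uncurry f) (x, y) v) p w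
      = fderiv ℝ (fderiv ℝ (Function.uncurry f)) p w v := by
    intro v w
    have hd : DifferentiableAt ℝ (fderiv ℝ (Function.uncurry f)) p :=
      ((ContDiffOn.fderiv_of_isOpen (m := (⊤ : ℕ∞)) hf hU (by simp)).contDiffAt
        (hU.mem_nhds hp)).differentiableAt (by simp)
    have h2 := hd.hasFDerivAt.clm_apply (hasFDerivAt_const v p)
    have h3 : (Function.uncurry fun x y => fderiv ℝ (Function.uncurry f) (x, y) v)
        = fun q => fderiv ℝ (Function.uncurry f) q v := rfl
    rw [h3, h2.fderiv]
    simp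
  have hsymm : IsSymmSndFDerivAt ℝ (Function.uncurry f) p :=
    (ContDiffOn.contDiffAt hf (hU.mem_nhds hp)).isSymmSndFDerivAt
      (by rw [minSmoothness_of_isRCLikeNormedField]; exact WithTop.coe_le_coe.2 le_top)
  have hF := hf.hasPartials_fderiv hU
  have ea := ((hf.fderiv_apply hU (1, 0)).hasPartials_fderiv hU).congr hU
    (fun q hq => (h.px_eq hq).symm.trans (hF.px_eq hq))
  have eb := ((hf.fderiv_apply hU (0, 1)).hasPartials_fderiv hU).congr hU
    (fun q hq => (h.py_eq hq).symm.trans (hF.py_eq hq))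
  rw [← ha.py_eq hp, ← hb.px_eq hp, ea.py_eq hp, eb.px_eq hp]
  exact (key _ _).trans ((hsymm.eq _ _).trans (key _ _).symm)

theorem SmoothOn2.py_px (hU : IsOpen U) (hf : SmoothOn2 f U) {p : ℝ × ℝ} (hp : p ∈ U) :
    _root_.py (_root_.px f) p.1 p.2 = _root_.px (_root_.py f) p.1 p.2 :=
  HasPartials.mixed hU hf (hf.hasPartials hU) ((hf.px hU).hasPartials hU)
    ((hf.py hU).hasPartials hU) hp

end Calculus

/-! ### Identities valid for every symplectic connection -/

section Connection

variable {U : Set (ℝ × ℝ)} {A B C D : ℝ → ℝ → ℝ}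

theorem smooth_R11 (hU : IsOpen U) (hA : SmoothOn2 A U) (hB : SmoothOn2 B U)
    (hD : SmoothOn2 D U) : SmoothOn2 (R11 A B C D) U :=
  ((hA.px hU).add (hB.py hU)).add (((hB.mul hD).sub (hA.pow 2)).smul 2)

theorem smooth_R22 (hU : IsOpen U) (hA : SmoothOn2 A U) (hC : SmoothOn2 C U)
    (hD : SmoothOn2 D U) : SmoothOn2 (R22 A B C D) U :=
  ((hC.px hU).add (hD.py hU)).add (((hA.mul hC).sub (hD.pow 2)).smul 2)

theorem smooth_R12 (hU : IsOpen U) (hA : SmoothOn2 A U) (hB : SmoothOn2 B U)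
    (hC : SmoothOn2 C U) (hD : SmoothOn2 D U) : SmoothOn2 (R12 A B C D) U :=
  (((hA.py hU).neg.sub (hD.px hU)).add (hA.mul hD)).sub (hB.mul hC)

theorem smooth_rho1 (hU : IsOpen U) (hA : SmoothOn2 A U) (hB : SmoothOn2 B U)
    (hC : SmoothOn2 C U) (hD : SmoothOn2 D U) : SmoothOn2 (rho1 A B C D) U :=
  (((((((((hA.px hU).py hU).smul (-2)).sub ((hB.py hU).py hU)).sub ((hD.px hU).px hU)).add
    (((hA.mul hD).sub (hB.mul hC)).px hU)).add
    ((((hA.pow 2).sub (hB.mul hD)).py hU).smul 3)).add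
    ((hA.smul 2).mul (hD.px hU))).sub (hD.mul (hA.px hU)) |>.sub (hB.mul (hC.px hU))).smul (-2)

theorem smooth_rho2 (hU : IsOpen U) (hA : SmoothOn2 A U) (hB : SmoothOn2 B U)
    (hC : SmoothOn2 C U) (hD : SmoothOn2 D U) : SmoothOn2 (rho2 A B C D) U :=
  (((((((((hD.px hU).py hU).smul 2).add ((hA.py hU).py hU)).add ((hC.px hU).px hU)).add
    ((((hA.mul hC).sub (hD.pow 2)).px hU).smul 3)).sub
    (((hA.mul hD).sub (hB.mul hC)).py hU)).sub
    ((hD.smul 2).mul (hA.py hU))).add (hA.mul (hD.py hU)) |>.add (hC.mul (hB.py hU))).smul (-2)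

theorem rho1_eq (hU : IsOpen U) (hA : SmoothOn2 A U) (hB : SmoothOn2 B U)
    (hC : SmoothOn2 C U) (hD : SmoothOn2 D U) {p : ℝ × ℝ} (hp : p ∈ U) :
    rho1 A B C D p.1 p.2 = (-2) * (nxRxy A B C D p.1 p.2 - nyRxx A B C D p.1 p.2) := by
  have a := hA.hasPartials hU
  have b := hB.hasPartials hU
  have c := hC.hasPartials hU
  have d := hD.hasPartials hU
  have ax := (hA.px hU).hasPartials hU
  have ay := (hA.py hU).hasPartials hU
  have b_y := (hB.py hU).hasPartials hU
  have dx := (hD.px hU).hasPartials hU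
  have e11 := HasPartials.py_eq (f := R11 A B C D)
    ((ax.add b_y).add (((b.mul d).sub a.sq).smul 2)) hp
  have e12 := HasPartials.px_eq (f := R12 A B C D)
    (((ay.neg.sub dx).add (a.mul d)).sub (b.mul c)) hp
  have f1 := ((a.mul d).sub (b.mul c)).px_eq hp
  have f2 := (a.sq.sub (b.mul d)).py_eq hp
  have m := hA.py_px hU hp
  simp only [rho1, nxRxy, nyRxx, e11, e12, f1, f2]
  simp only [R11, R12, R22]
  linear_combination 2 * m

theorem rho2_eq (hU : IsOpen U) (hA : SmoothOn2 A U) (hB : SmoothOn2 B U)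
    (hC : SmoothOn2 C U) (hD : SmoothOn2 D U) {p : ℝ × ℝ} (hp : p ∈ U) :
    rho2 A B C D p.1 p.2 = (-2) * (nxRyy A B C D p.1 p.2 - nyRxy A B C D p.1 p.2) := by
  have a := hA.hasPartials hU
  have b := hB.hasPartials hU
  have c := hC.hasPartials hU
  have d := hD.hasPartials hU
  have cx := (hC.px hU).hasPartials hU
  have ay := (hA.py hU).hasPartials hU
  have dy := (hD.py hU).hasPartials hU
  have dx := (hD.px hU).hasPartials hU
  have e22 := HasPartials.px_eq (f := R22 A B C D)
    ((cx.add dy).add (((a.mul c).sub d.sq).smul 2)) hp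
  have e12 := HasPartials.py_eq (f := R12 A B C D)
    (((ay.neg.sub dx).add (a.mul d)).sub (b.mul c)) hp
  have f1 := ((a.mul d).sub (b.mul c)).py_eq hp
  have f2 := ((a.mul c).sub d.sq).px_eq hp
  have m := hD.py_px hU hp
  simp only [rho2, nxRyy, nyRxy, e22, e12, f1, f2]
  simp only [R11, R12, R22]
  linear_combination (-2) * m

/-- The moment map is, up to a factor, the exterior derivative of the curvature one-form. -/
theorem Kmap_eq (hU : IsOpen U) (hA : SmoothOn2 A U) (hB : SmoothOn2 B U)
    (hC : SmoothOn2 C U) (hD : SmoothOn2 D U) {p : ℝ × ℝ} (hp : p ∈ U) :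
    Kmap A B C D p.1 p.2
      = (-(1/2)) * (px (rho2 A B C D) p.1 p.2 - py (rho1 A B C D) p.1 p.2) := by
  have a := hA.hasPartials hU
  have b := hB.hasPartials hU
  have c := hC.hasPartials hU
  have d := hD.hasPartials hU
  have ax := (hA.px hU).hasPartials hU
  have ay := (hA.py hU).hasPartials hU
  have b_y := (hB.py hU).hasPartials hU
  have cx := (hC.px hU).hasPartials hU
  have dx := (hD.px hU).hasPartials hU
  have dy := (hD.py hU).hasPartials hU
  have axy := ((hA.px hU).py hU).hasPartials hU
  have ayy := ((hA.py hU).py hU).hasPartials hU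
  have byy := ((hB.py hU).py hU).hasPartials hU
  have cxx := ((hC.px hU).px hU).hasPartials hU
  have dxx := ((hD.px hU).px hU).hasPartials hU
  have dxy := ((hD.px hU).py hU).hasPartials hU
  have sF := (hA.mul hD).sub (hB.mul hC)
  have sE := (hA.mul hC).sub (hD.pow 2)
  have sG := (hA.pow 2).sub (hB.mul hD)
  have G := sG.hasPartials hU
  have Fx := (sF.px hU).hasPartials hU
  have Fy := (sF.py hU).hasPartials hU
  have Ex := (sE.px hU).hasPartials hU
  have Gy := (sG.py hU).hasPartials hU
  have r1 := HasPartials.py_eq (f := rho1 A B C D)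
    ((((((((axy.smul (-2)).sub byy).sub dxx).add Fx).add (Gy.smul 3)).add
      ((a.smul 2).mul dx)).sub (d.mul ax)).sub (b.mul cx) |>.smul (-2)) hp
  have r2 := HasPartials.px_eq (f := rho2 A B C D)
    ((((((((dxy.smul 2).add ayy).add cxx).add (Ex.smul 3)).sub Fy).sub
      ((d.smul 2).mul ay)).add (a.mul dy)).add (c.mul b_y) |>.smul (-2)) hp
  -- `K` involves `BD - A²`, whereas `ρ₁` involves its negative.
  have hG : HasPartials U (fun x y => B x y * D x y - A x y ^ 2) _ _ :=
    G.neg.congr hU (fun p _ => by ring)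
  have hGyy := (Gy.neg.congr hU (fun q hq => hG.py_eq hq)).py_eq hp
  have mF := sF.py_px hU hp
  have mFe : py (px fun x y => A x y * D x y - B x y * C x y) p.1 p.2 = _ :=
    (((ax.mul d).add (a.mul dx)).sub (((hB.px hU).hasPartials hU |>.mul c).add (b.mul cx))
      |>.congr hU (fun q hq => ((a.mul d).sub (b.mul c)).px_eq hq)).py_eq hp
  have mA := hA.py_px hU hp
  have mB := hB.py_px hU hp
  have mD := hD.py_px hU hp
  -- Third derivatives: the `x`-derivative is moved inside.
  have mAyy : px (py (py A)) p.1 p.2 = py (py (px A)) p.1 p.2 := by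
    rw [← (hA.py hU).py_px hU hp]
    exact (axy.congr hU (fun q hq => (hA.py_px hU hq).symm)).py_eq hp
  have mDxy : px (py (px D)) p.1 p.2 = py (px (px D)) p.1 p.2 :=
    ((hD.px hU).py_px hU hp).symm
  simp only [Kmap, r1, r2, hGyy]
  linear_combination (-2 : ℝ) * mDxy - mAyy - mF - mFe - 2 * D p.1 p.2 * mA
    + A p.1 p.2 * mD + C p.1 p.2 * mB

end Connection

/-! ### Integrability conditions for a preferred connection -/

section Preferred

variable {U : Set (ℝ × ℝ)} {A B C D : ℝ → ℝ → ℝ}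

/-- For a preferred connection `∇Ric` is determined by `ρ`. -/
theorem hasPartials_ric (hU : IsOpen U) (hA : SmoothOn2 A U) (hB : SmoothOn2 B U)
    (hC : SmoothOn2 C U) (hD : SmoothOn2 D U) (hpref : Preferred A B C D U) :
    HasPartials U (R11 A B C D)
      (fun x y => 2 * (A x y * R11 A B C D x y + B x y * R12 A B C D x y))
      (fun x y => (-2) * (D x y * R11 A B C D x y + A x y * R12 A B C D x y)
        + (1/3) * rho1 A B C D x y) ∧
    HasPartials U (R12 A B C D)
      (fun x y => B x y * R22 A B C D x y - D x y * R11 A B C D x y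
        + (-(1/6)) * rho1 A B C D x y)
      (fun x y => C x y * R11 A B C D x y - A x y * R22 A B C D x y
        + (1/6) * rho2 A B C D x y) ∧
    HasPartials U (R22 A B C D)
      (fun x y => (-2) * (D x y * R12 A B C D x y + A x y * R22 A B C D x y)
        + (-(1/3)) * rho2 A B C D x y)
      (fun x y => 2 * (C x y * R12 A B C D x y + D x y * R22 A B C D x y)) := by
  have main : ∀ p ∈ U, _ := fun p hp =>
    And.intro (hpref p hp) (And.intro (rho1_eq hU hA hB hC hD hp) (rho2_eq hU hA hB hC hD hp))
  simp only [nxRxx, nyRxx, nxRxy, nyRxy, nxRyy, nyRyy] at main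
  refine ⟨((smooth_R11 hU hA hB hD).hasPartials hU).congr_partials ?_ ?_,
    ((smooth_R12 hU hA hB hC hD).hasPartials hU).congr_partials ?_ ?_,
    ((smooth_R22 hU hA hC hD).hasPartials hU).congr_partials ?_ ?_⟩ <;>
  · intro p hp
    obtain ⟨⟨h1, h2, h3, h4⟩, h5, h6⟩ := main p hp
    linarith

/-- Integrability of the system for `Ric`: `ρ` satisfies the Killing equation, so that `∇ρ` is
determined by `K`. -/
theorem hasPartials_rho (hU : IsOpen U) (hA : SmoothOn2 A U) (hB : SmoothOn2 B U)
    (hC : SmoothOn2 C U) (hD : SmoothOn2 D U) (hpref : Preferred A B C D U) :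
    HasPartials U (rho1 A B C D)
      (fun x y => A x y * rho1 A B C D x y + B x y * rho2 A B C D x y)
      (fun x y => Kmap A B C D x y - (D x y * rho1 A B C D x y + A x y * rho2 A B C D x y)) ∧
    HasPartials U (rho2 A B C D)
      (fun x y => (-1) * Kmap A B C D x y
        - (D x y * rho1 A B C D x y + A x y * rho2 A B C D x y))
      (fun x y => C x y * rho1 A B C D x y + D x y * rho2 A B C D x y) := by
  have a := hA.hasPartials hU
  have b := hB.hasPartials hU
  have c := hC.hasPartials hU
  have d := hD.hasPartials hU
  have s1 := smooth_rho1 hU hA hB hC hD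
  have s2 := smooth_rho2 hU hA hB hC hD
  have r1 := s1.hasPartials hU
  have r2 := s2.hasPartials hU
  obtain ⟨h11, h12, h22⟩ := hasPartials_ric hU hA hB hC hD hpref
  have main : ∀ p ∈ U,
      px (rho1 A B C D) p.1 p.2
        = A p.1 p.2 * rho1 A B C D p.1 p.2 + B p.1 p.2 * rho2 A B C D p.1 p.2 ∧
      py (rho2 A B C D) p.1 p.2
        = C p.1 p.2 * rho1 A B C D p.1 p.2 + D p.1 p.2 * rho2 A B C D p.1 p.2 ∧
      px (rho2 A B C D) p.1 p.2 + py (rho1 A B C D) p.1 p.2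
        = (-2) * (D p.1 p.2 * rho1 A B C D p.1 p.2 + A p.1 p.2 * rho2 A B C D p.1 p.2) := by
    intro p hp
    have m11 := HasPartials.mixed hU (smooth_R11 hU hA hB hD) h11
      (((a.mul h11).add (b.mul h12)).smul 2)
      ((((d.mul h11).add (a.mul h12)).smul (-2)).add (r1.smul (1/3))) hp
    have m12 := HasPartials.mixed hU (smooth_R12 hU hA hB hC hD) h12
      (((b.mul h22).sub (d.mul h11)).add (r1.smul (-(1/6))))
      (((c.mul h11).sub (a.mul h22)).add (r2.smul (1/6))) hp
    have m22 := HasPartials.mixed hU (smooth_R22 hU hA hC hD) h22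
      ((((d.mul h12).add (a.mul h22)).smul (-2)).add (r2.smul (-(1/3))))
      (((c.mul h12).add (d.mul h22)).smul 2) hp
    simp only [R11, R12, R22] at m11 m12 m22
    refine ⟨?_, ?_, ?_⟩
    · linear_combination (-3) * m11
    · linear_combination (-3) * m22
    · linear_combination (-6) * m12
  refine ⟨r1.congr_partials (fun p hp => (main p hp).1) fun p hp => ?_,
    r2.congr_partials (fun p hp => ?_) (fun p hp => (main p hp).2.1)⟩
  all_goals
    have := Kmap_eq hU hA hB hC hD hp
    have := (main p hp).2.2
    linarith

theorem smooth_Kmap (hU : IsOpen U) (hA : SmoothOn2 A U) (hB : SmoothOn2 B U)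
    (hC : SmoothOn2 C U) (hD : SmoothOn2 D U) : SmoothOn2 (Kmap A B C D) U :=
  ((((smooth_rho2 hU hA hB hC hD).px hU).sub ((smooth_rho1 hU hA hB hC hD).py hU)).smul
    (-(1/2))).congr fun _ hp => Kmap_eq hU hA hB hC hD hp

/-- Integrability of the system for `ρ`: it determines `dK`. -/
theorem hasPartials_K (hU : IsOpen U) (hA : SmoothOn2 A U) (hB : SmoothOn2 B U)
    (hC : SmoothOn2 C U) (hD : SmoothOn2 D U) (hpref : Preferred A B C D U) :
    HasPartials U (Kmap A B C D)
      (fun x y => R11 A B C D x y * rho2 A B C D x y - R12 A B C D x y * rho1 A B C D x y)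
      (fun x y => R12 A B C D x y * rho2 A B C D x y - R22 A B C D x y * rho1 A B C D x y) := by
  have a := hA.hasPartials hU
  have b := hB.hasPartials hU
  have c := hC.hasPartials hU
  have d := hD.hasPartials hU
  have k := (smooth_Kmap hU hA hB hC hD).hasPartials hU
  obtain ⟨r1, r2⟩ := hasPartials_rho hU hA hB hC hD hpref
  refine k.congr_partials (fun p hp => ?_) (fun p hp => ?_)
  · have m := HasPartials.mixed hU (smooth_rho1 hU hA hB hC hD) r1
      ((a.mul r1).add (b.mul r2)) (k.sub ((d.mul r1).add (a.mul r2))) hp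
    simp only [R11, R12]
    linear_combination -m
  · have m := HasPartials.mixed hU (smooth_rho2 hU hA hB hC hD) r2
      ((k.smul (-1)).sub ((d.mul r1).add (a.mul r2))) ((c.mul r1).add (d.mul r2)) hp
    simp only [R22, R12]
    linear_combination -m

end Preferred

/-- for a preferred symplectic connection on a surface, (a) the symmetrized
covariant derivative of the curvature one-form vanishes, and (b) the covariant Hessian of
the moment map satisfies ∇dK = (1/6)ρ⊗ρ − K·Ric. -/
theorem stmt2 (U : Set (ℝ × ℝ)) (hU : IsOpen U) (A B C D : ℝ → ℝ → ℝ)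
    (hA : SmoothOn2 A U) (hB : SmoothOn2 B U) (hC : SmoothOn2 C U)
    (hD : SmoothOn2 D U) (hpref : Preferred A B C D U) :
    ∀ p ∈ U,
      (px (rho1 A B C D) p.1 p.2 - A p.1 p.2 * rho1 A B C D p.1 p.2
          - B p.1 p.2 * rho2 A B C D p.1 p.2 = 0) ∧
      (py (rho2 A B C D) p.1 p.2 - C p.1 p.2 * rho1 A B C D p.1 p.2
          - D p.1 p.2 * rho2 A B C D p.1 p.2 = 0) ∧
      ((1/2) * (px (rho2 A B C D) p.1 p.2 + py (rho1 A B C D) p.1 p.2)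
          + D p.1 p.2 * rho1 A B C D p.1 p.2 + A p.1 p.2 * rho2 A B C D p.1 p.2 = 0) ∧
      (px (px (Kmap A B C D)) p.1 p.2 - A p.1 p.2 * px (Kmap A B C D) p.1 p.2
          - B p.1 p.2 * py (Kmap A B C D) p.1 p.2
          = (1/6) * rho1 A B C D p.1 p.2 ^ 2
            - Kmap A B C D p.1 p.2 * R11 A B C D p.1 p.2) ∧
      (py (py (Kmap A B C D)) p.1 p.2 - C p.1 p.2 * px (Kmap A B C D) p.1 p.2
          - D p.1 p.2 * py (Kmap A B C D) p.1 p.2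
          = (1/6) * rho2 A B C D p.1 p.2 ^ 2
            - Kmap A B C D p.1 p.2 * R22 A B C D p.1 p.2) ∧
      (py (px (Kmap A B C D)) p.1 p.2 + D p.1 p.2 * px (Kmap A B C D) p.1 p.2
          + A p.1 p.2 * py (Kmap A B C D) p.1 p.2
          = (1/6) * rho1 A B C D p.1 p.2 * rho2 A B C D p.1 p.2
            - Kmap A B C D p.1 p.2 * R12 A B C D p.1 p.2) := by
  intro p hp
  obtain ⟨h11, h12, h22⟩ := hasPartials_ric hU hA hB hC hD hpref
  obtain ⟨r1, r2⟩ := hasPartials_rho hU hA hB hC hD hpref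
  have k := hasPartials_K hU hA hB hC hD hpref
  have kx := ((h11.mul r2).sub (h12.mul r1)).congr hU (fun q hq => k.px_eq hq)
  have ky := ((h12.mul r2).sub (h22.mul r1)).congr hU (fun q hq => k.py_eq hq)
  rw [r1.px_eq hp, r1.py_eq hp, r2.px_eq hp, r2.py_eq hp, k.px_eq hp, k.py_eq hp,
    kx.px_eq hp, kx.py_eq hp, ky.py_eq hp]
  refine ⟨?_, ?_, ?_, ?_, ?_, ?_⟩ <;> ring
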